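/- arXiv:math/9805120 — 2 statements merged into one kernel-verified Lean document; each statement's English description precedes it below -/
import Mathlib

section
/- Let N = 2n+1 be odd and define M ∈ M_N(ℂ) by: M_{ab} = (1/√2)(δ_{ab} + δ_{a,b′}) for a ≤ n; M_{n+1,n+1} = i and M_{n+1,b} = 0 for b ≠ n+1; and M_{ab} = (1/√2)(i δ_{a,b′} − i δ_{ab}) for a ≥ n+2. Then M is invertible and (M⁻¹)ᵗ J M⁻¹ is a real diagonal matrix with exactly one diagonal entry equal to −1 (the middle one) and the remaining N−1 diagonal entries equal to +1, i.e. the q = 1 metric acquires Lorentzian signature (N−1, 1). This identifies the real form associated to the conjugation ∗♯ (the compact conjugation composed with the involutive automorphism ♯) as the odd-dimensional q-Lorentz group SO_q(N−1, 1). -/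
noncomputable section

open Matrix

/-- The `q = 1` quantum metric of `SO_q(N)`: `J_{ab} = δ_{a,b′}` with `a′ = N+1−a`
(`Fin.rev` in the 0-indexed encoding). -/
def Jmet (N : ℕ) : Matrix (Fin N) (Fin N) ℂ :=
  Matrix.of fun a b => if b = a.rev then 1 else 0


theorem Jmet_transpose (N : ℕ) : (Jmet N)ᵀ = Jmet N := by
  ext a b
  have h : a = b.rev ↔ b = a.rev := by rw [← Fin.rev_eq_iff, eq_comm]
  simp [Jmet, h]

theorem mul_Jmet_apply {N : ℕ} (A : Matrix (Fin N) (Fin N) ℂ) (a b : Fin N) :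
    (A * Jmet N) a b = A a b.rev := by
  have h (j : Fin N) : b = j.rev ↔ j = b.rev := by
    rw [← Fin.rev_eq_iff, eq_comm]
  simp [Matrix.mul_apply, Jmet, h]

theorem Jmet_mul_self (N : ℕ) : Jmet N * Jmet N = 1 := by
  ext a b
  rw [mul_Jmet_apply]
  simp [Jmet, Matrix.one_apply, eq_comm]

/-- The Gram matrix of rows of the form `α a • e a + β a • e a′`. -/
theorem mul_Jmet_mul_transpose_apply {N : ℕ} (α β : Fin N → ℂ) (a c : Fin N) :
    ((Matrix.of fun a b : Fin N => α a * (if b = a then 1 else 0) +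
        β a * (if b = a.rev then 1 else 0)) * Jmet N *
      (Matrix.of fun a b : Fin N => α a * (if b = a then 1 else 0) +
        β a * (if b = a.rev then 1 else 0))ᵀ) a c =
      (α a * (if c.rev = a then 1 else 0) + β a * (if c.rev = a.rev then 1 else 0)) * α c +
      (α a * (if c = a then 1 else 0) + β a * (if c = a.rev then 1 else 0)) * β c := by
  rw [Matrix.mul_apply]
  simp only [mul_Jmet_apply, Matrix.transpose_apply, Matrix.of_apply]
  have h : c.rev = a ↔ c = a.rev := Fin.rev_eq_iff
  simp_rw [mul_add _ (α c * _), Finset.sum_add_distrib, ← mul_assoc]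
  simp [h]

/-- If `M J Mᵀ = D` with `D` a symmetric involution, then `M` is invertible and transports the
metric `J` to `D`. -/
theorem isUnit_det_and_inv_transpose_mul_Jmet_mul_inv {N : ℕ} {M D : Matrix (Fin N) (Fin N) ℂ}
    (hMD : M * Jmet N * Mᵀ = D) (hD : D * D = 1) (hDt : Dᵀ = D) :
    IsUnit M.det ∧ (M⁻¹)ᵀ * Jmet N * M⁻¹ = D := by
  have hright : M * (Jmet N * Mᵀ * D) = 1 := by
    rw [← hD, ← hMD]
    simp only [Matrix.mul_assoc]
  refine ⟨Matrix.isUnit_det_of_right_inverse hright, ?_⟩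
  rw [Matrix.inv_eq_right_inv hright]
  calc (Jmet N * Mᵀ * D)ᵀ * Jmet N * (Jmet N * Mᵀ * D)
      = D * (M * (Jmet N * (Jmet N * Jmet N)) * Mᵀ) * D := by
        simp only [Matrix.transpose_mul, Matrix.transpose_transpose, Jmet_transpose, hDt,
          Matrix.mul_assoc]
    _ = D := by rw [Jmet_mul_self, Matrix.mul_one, hMD, hD, Matrix.one_mul]

/-- For `N = 2n+1` odd, the matrix `M` with
`M_{ab} = (1/√2)(δ_{ab} + δ_{a,b′})` for `a ≤ n`, `M_{n+1,n+1} = i` (and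
`M_{n+1,b} = 0` for `b ≠ n+1`), and `M_{ab} = (1/√2)(i δ_{a,b′} − i δ_{ab})` for
`a ≥ n+2` is invertible, and `(M⁻¹)ᵗ J M⁻¹` is a real diagonal matrix with exactly
one diagonal entry `−1` (the middle one) and the remaining `N−1` entries `+1`: the
`q = 1` metric acquires Lorentzian signature `(N−1, 1)`, identifying the real form
associated to the conjugation `∗♯` as the odd-dimensional `q`-Lorentz group
`SO_q(N−1, 1)`. -/
theorem lorentz_basis_odd (n : ℕ) (hn : 1 ≤ n) :
    ∀ M : Matrix (Fin (2 * n + 1)) (Fin (2 * n + 1)) ℂ,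
      M = Matrix.of (fun a b : Fin (2 * n + 1) =>
        if a.1 + 1 ≤ n then
          ((Real.sqrt 2 : ℂ))⁻¹ *
            ((if b = a then 1 else 0) + (if b = a.rev then 1 else 0))
        else if a.1 + 1 = n + 1 then (if b = a then Complex.I else 0)
        else
          ((Real.sqrt 2 : ℂ))⁻¹ *
            (Complex.I * (if b = a.rev then 1 else 0) -
              Complex.I * (if b = a then 1 else 0))) →
      IsUnit M.det ∧
      (M⁻¹)ᵀ * Jmet (2 * n + 1) * M⁻¹ =
        Matrix.diagonal (fun a : Fin (2 * n + 1) =>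
          if a.1 + 1 = n + 1 then (-1 : ℂ) else 1) := by
  rintro M rfl
  refine isUnit_det_and_inv_transpose_mul_Jmet_mul_inv ?_ ?_ (Matrix.diagonal_transpose _)
  · set s : ℂ := ((Real.sqrt 2 : ℂ))⁻¹ with hs
    have hss : s * s = 1 / 2 := by
      rw [hs, ← mul_inv, ← Complex.ofReal_mul, Real.mul_self_sqrt (by norm_num)]
      norm_num
    have hI := Complex.I_mul_I
    let α (a : Fin (2 * n + 1)) : ℂ :=
      if a.1 + 1 ≤ n then s else if a.1 + 1 = n + 1 then Complex.I else -(s * Complex.I)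
    let β (a : Fin (2 * n + 1)) : ℂ :=
      if a.1 + 1 ≤ n then s else if a.1 + 1 = n + 1 then 0 else s * Complex.I
    rw [show (Matrix.of _ : Matrix (Fin (2 * n + 1)) (Fin (2 * n + 1)) ℂ) =
      Matrix.of fun a b => α a * (if b = a then 1 else 0) + β a * (if b = a.rev then 1 else 0) by
        ext a b
        simp only [Matrix.of_apply, α, β]
        split_ifs <;> ring]
    ext a c
    rw [mul_Jmet_mul_transpose_apply, Matrix.diagonal_apply]
    have ha := a.2
    have hc := c.2
    simp only [Fin.ext_iff, Fin.val_rev, α, β]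
    split_ifs <;> first | omega | grind
  · rw [Matrix.diagonal_mul_diagonal, ← Matrix.diagonal_one]
    congr 1
    ext a
    split_ifs <;> norm_num
end
end

section
/- Let N = 2n be even, fix signs ε_j ∈ {+1, −1} with ε_{j′} = −ε_j for all j, and let D″ = i · diag(ε_1, …, ε_{2n}). Then: (i) D″² = −1_N; (ii) D″_{aa} · D″_{a′a′} = 1 for all a, hence R · (D″ ⊗ D″) = (D″ ⊗ D″) · R and D″ᵗ C D″ = C; (iii) conj(D″) = −D″ = Cᵗ D″ Cᵗ. Thus D″ defines an involutive Hopf algebra automorphism T ↦ D″ T D″⁻¹ of SO_q(N) commuting with the compact conjugation, whose composition with it yields the real forms SO*_q(2n). -/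
noncomputable section

open Matrix Kronecker

/-- The integer `2·ρ_a` for the 1-indexed index `a` of `{1,…,N}` (represented by
`a : Fin N`, whose 1-indexed value is `a.1 + 1`), where
`(ρ_1,…,ρ_N) = (N/2−1, …, 1/2, 0, −1/2, …, −N/2+1)` for `N` odd and
`(N/2−1, …, 1, 0, 0, −1, …, −N/2+1)` for `N` even.  Powers `q^{ρ_a}` are
interpreted as `p^(2·ρ_a)`. -/
def rhoTwo (N : ℕ) (a : Fin N) : ℤ :=
  if 2 * ((a.1 : ℤ) + 1) < (N : ℤ) + 1 then (N : ℤ) - 2 * ((a.1 : ℤ) + 1)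
  else if (N : ℤ) + 1 < 2 * ((a.1 : ℤ) + 1) then (N : ℤ) + 2 - 2 * ((a.1 : ℤ) + 1)
  else 0

/-- The quantum metric `C_{ab} = q^{−ρ_a} δ_{a,b′} = p^{−2ρ_a} δ_{b,a′}`, where the
primed index `a′ = N+1−a` is `Fin.rev a` in the 0-indexed encoding. -/
def qMetric (N : ℕ) (p : ℂ) : Matrix (Fin N) (Fin N) ℂ :=
  Matrix.of fun a b => if b = a.rev then p ^ (-(rhoTwo N a)) else 0

/-- The quantum orthogonal R-matrix, rows and columns indexed by pairs `(a,b)`, with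
`q = p²`; its only nonzero entries are those listed in FRT:
`R^{aa}_{aa} = q` (`a ≠ a′`), `R^{aa}_{aa} = 1` (`a = a′`), `R^{aa′}_{aa′} = q⁻¹`
(`a ≠ a′`), `R^{ab}_{ab} = 1` (`a ≠ b`, `a′ ≠ b`), `R^{ab}_{ba} = q − q⁻¹`
(`a > b`, `a′ ≠ b`), `R^{aa′}_{a′a} = (q − q⁻¹)(1 − q^{ρ_a−ρ_{a′}})` (`a > a′`), and
`R^{aa′}_{bb′} = −(q − q⁻¹) q^{ρ_a−ρ_b}` (`a > b`, `a′ ≠ b`). -/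
def qRmat (N : ℕ) (p : ℂ) : Matrix (Fin N × Fin N) (Fin N × Fin N) ℂ :=
  Matrix.of fun x y =>
    if x.1 = x.2 ∧ y.1 = x.1 ∧ y.2 = x.1 then
      (if x.1 = x.1.rev then 1 else p ^ (2 : ℤ))
    else if x.2 = x.1.rev ∧ x.1 ≠ x.1.rev ∧ y = x then (p ^ (2 : ℤ))⁻¹
    else if x.1 ≠ x.2 ∧ x.1.rev ≠ x.2 ∧ y = x then 1
    else if x.2 < x.1 ∧ x.1.rev ≠ x.2 ∧ y.1 = x.2 ∧ y.2 = x.1 then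
      p ^ (2 : ℤ) - (p ^ (2 : ℤ))⁻¹
    else if x.2 = x.1.rev ∧ x.1.rev < x.1 ∧ y.1 = x.1.rev ∧ y.2 = x.1 then
      (p ^ (2 : ℤ) - (p ^ (2 : ℤ))⁻¹) * (1 - p ^ (2 * rhoTwo N x.1))
    else if x.2 = x.1.rev ∧ y.1 < x.1 ∧ x.1.rev ≠ y.1 ∧ y.2 = y.1.rev then
      -(p ^ (2 : ℤ) - (p ^ (2 : ℤ))⁻¹) * p ^ (rhoTwo N x.1 - rhoTwo N y.1)
    else 0

/-- `ρ_{a′} = −ρ_a`. -/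
lemma rhoTwo_rev (N : ℕ) (a : Fin N) : rhoTwo N a.rev = -rhoTwo N a := by
  have ha := a.isLt
  have hrev : ((a.rev.1 : ℕ) : ℤ) = N - (a.1 + 1) := by
    rw [Fin.val_rev]
    omega
  unfold rhoTwo
  rw [hrev]
  split_ifs <;> omega

/-- The R-matrix preserves the weights `d_a d_b` whenever `d_a d_{a′} = 1`. -/
lemma weight_eq_of_qRmat_ne_zero {N : ℕ} {p : ℂ} {d : Fin N → ℂ}
    (hd : ∀ a, d a * d a.rev = 1) {x y : Fin N × Fin N} (h : qRmat N p x y ≠ 0) :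
    d x.1 * d x.2 = d y.1 * d y.2 := by
  obtain ⟨a, b⟩ := x
  obtain ⟨c, e⟩ := y
  simp only [qRmat, Matrix.of_apply, Prod.mk.injEq] at h
  split_ifs at h <;> grind

/-- The R-matrix commutes with `D ⊗ D` for every diagonal `D` with `d_a d_{a′} = 1`. -/
lemma qRmat_mul_kronecker_diagonal {N : ℕ} (p : ℂ) {d : Fin N → ℂ}
    (hd : ∀ a, d a * d a.rev = 1) :
    qRmat N p * (diagonal d ⊗ₖ diagonal d) = (diagonal d ⊗ₖ diagonal d) * qRmat N p := by
  rw [diagonal_kronecker_diagonal]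
  ext x y
  rw [mul_diagonal, diagonal_mul]
  by_cases h : qRmat N p x y = 0
  · simp [h]
  · rw [weight_eq_of_qRmat_ne_zero hd h, mul_comm]

/-- `Dᵗ C D = C` for every diagonal `D` with `d_a d_{a′} = 1`. -/
lemma diagonal_transpose_mul_qMetric_mul {N : ℕ} (p : ℂ) {d : Fin N → ℂ}
    (hd : ∀ a, d a * d a.rev = 1) :
    (diagonal d)ᵀ * qMetric N p * diagonal d = qMetric N p := by
  ext a b
  rw [diagonal_transpose, mul_diagonal, diagonal_mul, qMetric, of_apply]
  split_ifs with h
  · rw [h, mul_right_comm, hd, one_mul]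
  · simp

/-- Conjugating a diagonal matrix with `Cᵗ` reverses its entries. -/
lemma qMetric_transpose_mul_diagonal_mul {N : ℕ} {p : ℂ} (hp : p ≠ 0) (d : Fin N → ℂ) :
    (qMetric N p)ᵀ * diagonal d * (qMetric N p)ᵀ = diagonal fun a => d a.rev := by
  ext a b
  simp only [mul_apply (M := (qMetric N p)ᵀ * diagonal d), mul_diagonal, transpose_apply]
  rw [Finset.sum_eq_single a.rev]
  · by_cases h : a = b
    · subst h
      simp only [qMetric, of_apply, Fin.rev_rev, if_true, diagonal_apply_eq]
      rw [mul_right_comm, ← zpow_add₀ hp, rhoTwo_rev]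
      simp
    · simp [qMetric, h]
  · intro c _ hc
    have hac : a ≠ c.rev := fun h => hc (by rw [h, Fin.rev_rev])
    simp [qMetric, hac]
  · simp

/-- Let `N = 2n` be even, fix signs `ε_j ∈ {+1,−1}` with
`ε_{j′} = −ε_j`, and set `D″ = i · diag(ε_1, …, ε_{2n})`.  Then (i) `D″² = −1`;
(ii) `D″_{aa} · D″_{a′a′} = 1` for all `a`, hence `R · (D″ ⊗ D″) = (D″ ⊗ D″) · R`
and `D″ᵗ C D″ = C`; (iii) `conj D″ = −D″ = Cᵗ D″ Cᵗ`.  Thus `D″` defines an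
involutive Hopf algebra automorphism `T ↦ D″ T D″⁻¹` of `SO_q(N)` commuting with the
compact conjugation, whose composition with it yields the real forms `SO*_q(2n)`. -/
theorem Dpp_properties (n : ℕ) (hn : 2 ≤ n) (p : ℂ) (hp : p ≠ 0)
    (ε : Fin (2 * n) → ℝ) (hε : ∀ a, ε a = 1 ∨ ε a = -1)
    (hanti : ∀ a : Fin (2 * n), ε a.rev = -ε a) :
    ∀ D : Matrix (Fin (2 * n)) (Fin (2 * n)) ℂ,
      D = Matrix.diagonal (fun a => Complex.I * (ε a : ℂ)) →
      D * D = -1 ∧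
      (∀ a : Fin (2 * n), D a a * D a.rev a.rev = 1) ∧
      qRmat (2 * n) p * (D ⊗ₖ D) = (D ⊗ₖ D) * qRmat (2 * n) p ∧
      Dᵀ * qMetric (2 * n) p * D = qMetric (2 * n) p ∧
      D.map (starRingEnd ℂ) = -D ∧
      (qMetric (2 * n) p)ᵀ * D * (qMetric (2 * n) p)ᵀ = -D := by
  rintro D rfl
  have hsq : ∀ a, (ε a : ℂ) * ε a = 1 := fun a => by
    rcases hε a with h | h <;> simp [h]
  have hd : ∀ a : Fin (2 * n),
      Complex.I * (ε a : ℂ) * (Complex.I * (ε a.rev : ℂ)) = 1 := fun a => by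
    rw [hanti, Complex.ofReal_neg]
    linear_combination (-Complex.I * Complex.I) * hsq a - Complex.I_mul_I
  refine ⟨?_, fun a => by simpa using hd a, qRmat_mul_kronecker_diagonal p hd,
    diagonal_transpose_mul_qMetric_mul p hd, ?_, ?_⟩
  · rw [diagonal_mul_diagonal, ← diagonal_one, diagonal_neg]
    congr 1
    ext a
    linear_combination (Complex.I * Complex.I) * hsq a + Complex.I_mul_I
  · rw [diagonal_map (map_zero _), diagonal_neg]
    congr 1
    ext a
    simp
  · rw [qMetric_transpose_mul_diagonal_mul hp, diagonal_neg]
    congr 1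
    ext a
    simp [hanti]
end
end
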